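/- arXiv:2408.02527 — 2 statements merged into one kernel-verified Lean document; each statement's English description precedes it below -/
import Mathlib

section
/- For every natural number n, the base-10 digit reversal of 11·(10^(n+2) − 1) equals 99·(10^(n+2) − 1); equivalently, rev(a) = 9·a for a = 11·(10^(n+2) − 1). -/
/-!
The number `11 * (10 ^ (n + 2) - 1)` is written `1 0 9 ⋯ 9 8 9` in base 10, with `n` nines between
`10` and `89`. Reversing this word gives `9 8 9 ⋯ 9 0 1`, which is `99 * (10 ^ (n + 2) - 1)`. Both
evaluations reduce to the fact that a block of `n` nines has value `10 ^ n - 1`.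
-/

def rev (n : ℕ) : ℕ := Nat.ofDigits 10 ((Nat.digits 10 n).reverse)

def f (n : ℕ) : ℕ := if rev n < n then n - rev n else n + rev n

theorem ofDigits_replicate_nine (n : ℕ) :
    Nat.ofDigits 10 (List.replicate n 9) + 1 = 10 ^ n := by
  induction n with
  | zero => simp
  | succ k ih =>
    rw [List.replicate_succ, Nat.ofDigits_cons, pow_succ, ← ih]
    ring

/-- The digits are listed from the least significant one, as in `Nat.digits`. -/
theorem digits_family (n : ℕ) :
    Nat.digits 10 (11 * (10 ^ (n + 2) - 1)) = [9, 8] ++ List.replicate n 9 ++ [0, 1] := by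
  have hval : 11 * (10 ^ (n + 2) - 1)
      = Nat.ofDigits 10 ([9, 8] ++ List.replicate n 9 ++ [0, 1]) := by
    have h := ofDigits_replicate_nine n
    simp [Nat.ofDigits_append, Nat.ofDigits_cons, pow_succ]
    omega
  rw [hval]
  apply Nat.digits_ofDigits 10 (by norm_num)
  · intro d hd
    simp only [List.mem_append, List.mem_cons, List.mem_replicate, List.not_mem_nil, or_false] at hd
    omega
  · intro _
    simp

theorem rev_of_family :
    ∀ n : ℕ, rev (11 * (10 ^ (n + 2) - 1)) = 99 * (10 ^ (n + 2) - 1) := by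
  intro n
  have h := ofDigits_replicate_nine n
  rw [rev, digits_family]
  simp [Nat.ofDigits_append, Nat.ofDigits_cons, pow_succ]
  omega
end

section
/- The trajectory of the digit-reversal map f starting from 1099989000 is never attracted to a cycle: there do not exist natural numbers k and p with p ≥ 1 such that f^[k+p](1099989000) = f^[k](1099989000). -/
/-- Digit reversal is list reversal on every digit list without leading zeros. -/
lemma rev_ofDigits (L : List ℕ) (h₁ : ∀ d ∈ L, d < 10) (h₂ : ∀ h : L ≠ [], L.getLast h ≠ 0) :
    rev (Nat.ofDigits 10 L) = Nat.ofDigits 10 L.reverse := by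
  unfold rev
  rw [Nat.digits_ofDigits 10 (by norm_num) L h₁ h₂]

lemma f_eq_of_add_rev {n m r : ℕ} (hr : rev n = r) (hm : 0 < m) (h : m + r = n) : f n = m := by
  unfold f
  rw [if_pos (by omega)]
  omega

lemma f_eq_of_le_rev {n m r : ℕ} (hr : rev n = r) (hle : n ≤ r) (h : n + r = m) : f n = m := by
  unfold f
  rw [if_neg (by omega)]
  omega

lemma ofDigits_zeros (k : ℕ) : Nat.ofDigits 10 (List.replicate k 0) = 0 := by
  induction k with
  | zero => rfl
  | succ k ih => simp [List.replicate_succ, Nat.ofDigits_cons, ih]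

lemma ofDigits_nines_add_one (k : ℕ) : Nat.ofDigits 10 (List.replicate k 9) + 1 = 10 ^ k := by
  induction k with
  | zero => rfl
  | succ k ih =>
    rw [List.replicate_succ, Nat.ofDigits_cons, pow_succ, ← ih]
    ring

/-- The digits, least significant first, of `10 9…9 89 0…0` with `a` nines and `b` zeros. -/
def digitsA (a b : ℕ) : List ℕ :=
  List.replicate b 0 ++ ([9, 8] ++ (List.replicate a 9 ++ [0, 1]))

/-- The digits, least significant first, of `10 9…9 v 0…0 99` with `a` nines after `10` and
`b` zeros before `99`; the middle block `v` is given by its digits `w`, least significant first. -/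
def digitsB (w : List ℕ) (a b : ℕ) : List ℕ :=
  [9, 9] ++ (List.replicate b 0 ++ (w ++ (List.replicate a 9 ++ [0, 1])))

lemma rev_digitsA (a b : ℕ) :
    rev (Nat.ofDigits 10 (digitsA a b)) = Nat.ofDigits 10 (digitsA a b).reverse := by
  apply rev_ofDigits
  · intro d hd
    simp only [digitsA, List.mem_append, List.mem_replicate, List.mem_cons,
      List.not_mem_nil, or_false] at hd
    omega
  · intro h
    simp [digitsA]

lemma rev_digitsB (w : List ℕ) (a b : ℕ) (hw : ∀ d ∈ w, d < 10) :
    rev (Nat.ofDigits 10 (digitsB w a b)) = Nat.ofDigits 10 (digitsB w a b).reverse := by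
  apply rev_ofDigits
  · intro d hd
    simp only [digitsB, List.mem_append, List.mem_replicate, List.mem_cons,
      List.not_mem_nil] at hd
    have := hw d
    grind
  · intro h
    simp [digitsB]

lemma ofDigits_digitsA (a b : ℕ) :
    Nat.ofDigits 10 (digitsA a b) + 11 * 10 ^ b = 11 * 10 ^ b * 10 ^ (a + 2) := by
  rw [pow_add, ← ofDigits_nines_add_one a]
  simp only [digitsA, Nat.ofDigits_append, Nat.ofDigits_cons, Nat.ofDigits_nil, ofDigits_zeros,
    List.length_replicate, List.length_cons, List.length_nil, ← ofDigits_nines_add_one a]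
  ring

lemma ofDigits_digitsA_reverse (a b : ℕ) :
    Nat.ofDigits 10 (digitsA a b).reverse + 99 = 99 * 10 ^ (a + 2) := by
  rw [pow_add, ← ofDigits_nines_add_one a]
  simp only [digitsA, List.reverse_append, List.reverse_replicate, List.reverse_cons,
    List.reverse_nil, List.nil_append, List.cons_append, List.append_assoc,
    Nat.ofDigits_append, Nat.ofDigits_cons, ofDigits_zeros,
    List.length_replicate, ← ofDigits_nines_add_one a]
  ring

lemma ofDigits_digitsB (w : List ℕ) (a b : ℕ) :
    Nat.ofDigits 10 (digitsB w a b) + 10 ^ (b + 2 + w.length) =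
      99 + 10 ^ (b + 2) * Nat.ofDigits 10 w + 11 * 10 ^ (b + 2 + w.length) * 10 ^ a := by
  rw [← ofDigits_nines_add_one a]
  simp only [digitsB, Nat.ofDigits_append, Nat.ofDigits_cons, Nat.ofDigits_nil, ofDigits_zeros,
    List.length_replicate, List.length_cons, List.length_nil, ← ofDigits_nines_add_one a]
  ring

lemma ofDigits_digitsB_reverse (w : List ℕ) (a b : ℕ) :
    Nat.ofDigits 10 (digitsB w a b).reverse + 99 =
      10 ^ (a + 2) + 10 ^ (a + 2) * Nat.ofDigits 10 w.reverse
        + 99 * 10 ^ (a + b + 2 + w.length) := by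
  simp only [pow_add, ← ofDigits_nines_add_one a]
  simp only [digitsB, List.reverse_append, List.reverse_replicate, List.reverse_cons,
    List.reverse_nil, List.nil_append, List.cons_append, List.append_assoc,
    Nat.ofDigits_append, Nat.ofDigits_cons, Nat.ofDigits_nil, ofDigits_zeros, List.length_reverse,
    List.length_replicate, ← ofDigits_nines_add_one a]
  ring

/-- Two steps of `f`, through the intermediate number `digitsB w c d`. The hypotheses are the
arithmetic identities and inequalities behind the subtraction, the comparison, and the addition. -/
lemma f_f_digitsA (w : List ℕ) (a b c d a' b' : ℕ) (hw : ∀ e ∈ w, e < 10)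
    (hsub : Nat.ofDigits 10 (digitsB w c d) + Nat.ofDigits 10 (digitsA a b).reverse
      = Nat.ofDigits 10 (digitsA a b))
    (hle : Nat.ofDigits 10 (digitsB w c d) ≤ Nat.ofDigits 10 (digitsB w c d).reverse)
    (hadd : Nat.ofDigits 10 (digitsB w c d) + Nat.ofDigits 10 (digitsB w c d).reverse
      = Nat.ofDigits 10 (digitsA a' b')) :
    f^[2] (Nat.ofDigits 10 (digitsA a b)) = Nat.ofDigits 10 (digitsA a' b') := by
  have hpos : 0 < Nat.ofDigits 10 (digitsB w c d) := by
    simp [digitsB, Nat.ofDigits_cons]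
  change f (f _) = _
  rw [f_eq_of_add_rev (rev_digitsA a b) hpos hsub]
  exact f_eq_of_le_rev (rev_digitsB w c d hw) hle hadd

lemma step_one (k : ℕ) :
    f^[2] (Nat.ofDigits 10 (digitsA (k + 2) (k + 2))) = Nat.ofDigits 10 (digitsA (k + 2) (k + 3)) := by
  have hA := ofDigits_digitsA (k + 2) (k + 2)
  have hA' := ofDigits_digitsA_reverse (k + 2) (k + 2)
  have hB := ofDigits_digitsB [9, 8, 0, 0] (k) (k)
  have hB' := ofDigits_digitsB_reverse [9, 8, 0, 0] (k) (k)
  have hC := ofDigits_digitsA (k + 2) (k + 3)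
  have hk : 1 ≤ 10 ^ k := Nat.one_le_pow _ _ (by norm_num)
  simp only [List.length_cons, List.length_nil, List.reverse_cons, List.reverse_nil,
    List.nil_append, List.cons_append, Nat.ofDigits_cons, Nat.ofDigits_nil,
    pow_add] at hA hA' hB hB' hC
  generalize 10 ^ k = x at *
  apply f_f_digitsA [9, 8, 0, 0] _ _ (k) (k)
  · simp
  · nlinarith
  · nlinarith
  · nlinarith

lemma step_two (k : ℕ) :
    f^[2] (Nat.ofDigits 10 (digitsA (k + 2) (k + 3))) = Nat.ofDigits 10 (digitsA (k + 4) (k + 2)) := by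
  have hA := ofDigits_digitsA (k + 2) (k + 3)
  have hA' := ofDigits_digitsA_reverse (k + 2) (k + 3)
  have hB := ofDigits_digitsB [9, 9, 9, 8] (k) (k + 1)
  have hB' := ofDigits_digitsB_reverse [9, 9, 9, 8] (k) (k + 1)
  have hC := ofDigits_digitsA (k + 4) (k + 2)
  have hk : 1 ≤ 10 ^ k := Nat.one_le_pow _ _ (by norm_num)
  simp only [List.length_cons, List.length_nil, List.reverse_cons, List.reverse_nil,
    List.nil_append, List.cons_append, Nat.ofDigits_cons, Nat.ofDigits_nil,
    pow_add] at hA hA' hB hB' hC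
  generalize 10 ^ k = x at *
  apply f_f_digitsA [9, 9, 9, 8] _ _ (k) (k + 1)
  · simp
  · nlinarith
  · nlinarith
  · nlinarith

lemma step_three (k : ℕ) :
    f^[2] (Nat.ofDigits 10 (digitsA (k + 4) (k + 2))) = Nat.ofDigits 10 (digitsA (k + 4) (k + 3)) := by
  have hA := ofDigits_digitsA (k + 4) (k + 2)
  have hA' := ofDigits_digitsA_reverse (k + 4) (k + 2)
  have hB := ofDigits_digitsB [9, 8, 9, 9, 0, 0] (k) (k)
  have hB' := ofDigits_digitsB_reverse [9, 8, 9, 9, 0, 0] (k) (k)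
  have hC := ofDigits_digitsA (k + 4) (k + 3)
  have hk : 1 ≤ 10 ^ k := Nat.one_le_pow _ _ (by norm_num)
  simp only [List.length_cons, List.length_nil, List.reverse_cons, List.reverse_nil,
    List.nil_append, List.cons_append, Nat.ofDigits_cons, Nat.ofDigits_nil,
    pow_add] at hA hA' hB hB' hC
  generalize 10 ^ k = x at *
  apply f_f_digitsA [9, 8, 9, 9, 0, 0] _ _ (k) (k)
  · simp
  · nlinarith
  · nlinarith
  · nlinarith

lemma step_four (k : ℕ) :
    f^[2] (Nat.ofDigits 10 (digitsA (k + 4) (k + 3))) = Nat.ofDigits 10 (digitsA (k + 4) (k + 4)) := by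
  have hA := ofDigits_digitsA (k + 4) (k + 3)
  have hA' := ofDigits_digitsA_reverse (k + 4) (k + 3)
  have hB := ofDigits_digitsB [9, 8, 9, 0, 0] (k + 1) (k + 1)
  have hB' := ofDigits_digitsB_reverse [9, 8, 9, 0, 0] (k + 1) (k + 1)
  have hC := ofDigits_digitsA (k + 4) (k + 4)
  have hk : 1 ≤ 10 ^ k := Nat.one_le_pow _ _ (by norm_num)
  simp only [List.length_cons, List.length_nil, List.reverse_cons, List.reverse_nil,
    List.nil_append, List.cons_append, Nat.ofDigits_cons, Nat.ofDigits_nil,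
    pow_add] at hA hA' hB hB' hC
  generalize 10 ^ k = x at *
  apply f_f_digitsA [9, 8, 9, 0, 0] _ _ (k + 1) (k + 1)
  · simp
  · nlinarith
  · nlinarith
  · nlinarith

lemma f_iterate_eight (k : ℕ) :
    f^[8] (Nat.ofDigits 10 (digitsA (k + 2) (k + 2)))
      = Nat.ofDigits 10 (digitsA (k + 4) (k + 4)) := by
  rw [show 8 = 2 + (2 + (2 + 2)) from rfl, Function.iterate_add_apply, Function.iterate_add_apply,
    Function.iterate_add_apply, step_one, step_two, step_three, step_four]

lemma f_iterate_eight_mul (i : ℕ) :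
    f^[8 * i] 1099989000 = Nat.ofDigits 10 (digitsA (2 * i + 3) (2 * i + 3)) := by
  induction i with
  | zero => simp [digitsA, Nat.ofDigits_cons, List.replicate_succ]
  | succ i ih =>
    rw [Nat.mul_succ, Nat.add_comm, Function.iterate_add_apply, ih]
    exact f_iterate_eight (2 * i + 1)

lemma strictMono_digitsA : StrictMono fun m => Nat.ofDigits 10 (digitsA m m) := by
  refine strictMono_nat_of_lt_succ fun m => ?_
  have h := ofDigits_digitsA m m
  have h' := ofDigits_digitsA (m + 1) (m + 1)
  have hm : 1 ≤ 10 ^ m := Nat.one_le_pow _ _ (by norm_num)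
  simp only [pow_add] at h h'
  nlinarith

theorem never_cyclic_1099989000 :
    ¬ ∃ k p : ℕ, 1 ≤ p ∧ f^[k + p] 1099989000 = f^[k] 1099989000 := by
  rintro ⟨k, p, hp, h⟩
  have hper : Function.IsPeriodicPt f p (f^[k] 1099989000) := by
    change f^[p] _ = _
    rw [← Function.iterate_add_apply, Nat.add_comm, h]
  -- Periodicity persists along the orbit, so the value at time `8k` has period `8p`.
  have hper' : f^[8 * p] (f^[7 * k] (f^[k] 1099989000)) = f^[7 * k] (f^[k] 1099989000) :=
    (hper.const_mul 8).apply_iterate (7 * k)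
  rw [← Function.iterate_add_apply, ← Function.iterate_add_apply, ← Function.iterate_add_apply,
    show 8 * p + 7 * k + k = 8 * (p + k) by ring, show 7 * k + k = 8 * k by ring,
    f_iterate_eight_mul, f_iterate_eight_mul] at hper'
  have := strictMono_digitsA.injective hper'
  omega
end
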